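/- For every n : ℕ, the number of lambda terms of size n equals the number of black-white trees with n nodes. (Equivalently, the maps LtoBw and BwtoL of the paper are mutually inverse size-preserving bijections between lambda terms and black-white trees.) -/

import Mathlib

/-- Lambda terms with de Bruijn indices. -/
inductive Term : Type
  | var : ℕ → Term
  | app : Term → Term → Term
  | abs : Term → Term

namespace Term

/-- Natural size: every operator (zero, successor, application, abstraction) has size 1. -/
def size : Term → ℕ
  | var k => k + 1
  | app M N => M.size + N.size + 1
  | abs M => M.size + 1

end Term

/-- `L n` is the number of lambda terms of size `n`. -/
noncomputable def L (n : ℕ) : ℕ := Nat.card {t : Term // t.size = n}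


mutual
  /-- Black-white trees with a black root: a black node has no right child and
  its left subtree is either a black-rooted tree or a (possibly empty) white-rooted tree. -/
  inductive BWBlack : Type
    | blackLeft : BWBlack → BWBlack
    | whiteLeft : BWWhite → BWBlack

  /-- (Possibly empty) white-rooted black-white trees: a white node has a possibly empty
  white-rooted left subtree and an optional black-rooted right subtree. -/
  inductive BWWhite : Type
    | empty : BWWhite
    | whiteLeft : BWWhite → BWWhite
    | whiteLeftBlackRight : BWWhite → BWBlack → BWWhite
end

mutual
  /-- Number of nodes of a black-rooted black-white tree. -/
  def BWBlack.size : BWBlack → ℕ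
    | .blackLeft t => t.size + 1
    | .whiteLeft t => t.size + 1

  /-- Number of nodes of a (possibly empty) white-rooted black-white tree. -/
  def BWWhite.size : BWWhite → ℕ
    | .empty => 0
    | .whiteLeft t => t.size + 1
    | .whiteLeftBlackRight t t' => t.size + t'.size + 1
end

/-!
The left spine of a black-white tree starts with `k + 1` black nodes, followed by white nodes.
Read from the bottom up, the white part of the spine is a program building a term: start from
the variable `k`, abstract at each white node without a right child, and apply to the term of the
right subtree at each white node that has one. Every term arises from exactly one such program,
and each node pays for exactly one symbol.
-/

mutual
  /-- The term read off a black-rooted tree hanging below `k` further black nodes. For `k = 0`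
  this is the map `BwtoL` from black-white trees to lambda terms; the accumulator `k` makes the
  recursion structural. -/
  def BWBlack.toTerm : BWBlack → ℕ → Term
    | .blackLeft b, k => b.toTerm (k + 1)
    | .whiteLeft w, k => w.toTerm k

  /-- The term read off a white-rooted tree whose left spine ends in the variable `k`. -/
  def BWWhite.toTerm : BWWhite → ℕ → Term
    | .empty, k => .var k
    | .whiteLeft w, k => .abs (w.toTerm k)
    | .whiteLeftBlackRight w b, k => .app (w.toTerm k) (b.toTerm 0)
end

/-- Replaces the white tree `w` below the initial black nodes of the left spine by `f w`. -/
def BWBlack.mapWhite (f : BWWhite → BWWhite) : BWBlack → BWBlack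
  | .blackLeft b => .blackLeft (b.mapWhite f)
  | .whiteLeft w => .whiteLeft (f w)

/-- The map `LtoBw` from lambda terms to black-white trees: an abstraction or application inserts
one white node just below the initial black nodes of the left spine. -/
def Term.toBlack : Term → BWBlack
  | .var k => BWBlack.blackLeft^[k] (.whiteLeft .empty)
  | .abs M => M.toBlack.mapWhite .whiteLeft
  | .app M N => M.toBlack.mapWhite (.whiteLeftBlackRight · N.toBlack)

mutual
  theorem BWBlack.size_toTerm : ∀ (b : BWBlack) (k : ℕ), (b.toTerm k).size = b.size + k
    | .blackLeft b, k => by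
        rw [BWBlack.toTerm, BWBlack.size, b.size_toTerm (k + 1)]
        ring
    | .whiteLeft w, k => by
        rw [BWBlack.toTerm, BWBlack.size, w.size_toTerm k]
        ring

  theorem BWWhite.size_toTerm : ∀ (w : BWWhite) (k : ℕ), (w.toTerm k).size = w.size + k + 1
    | .empty, k => by
        rw [BWWhite.toTerm, BWWhite.size, Term.size, zero_add]
    | .whiteLeft w, k => by
        rw [BWWhite.toTerm, BWWhite.size, Term.size, w.size_toTerm k]
        ring
    | .whiteLeftBlackRight w b, k => by
        rw [BWWhite.toTerm, BWWhite.size, Term.size, w.size_toTerm k, b.size_toTerm 0]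
        ring
end

namespace BWBlack

theorem toTerm_iterate_blackLeft (b : BWBlack) (j k : ℕ) :
    (blackLeft^[j] b).toTerm k = b.toTerm (k + j) := by
  induction j generalizing k with
  | zero => rfl
  | succ j ih => rw [Function.iterate_succ_apply', toTerm, ih, Nat.succ_add_eq_add_succ]

theorem mapWhite_iterate_blackLeft (f : BWWhite → BWWhite) (k : ℕ) (b : BWBlack) :
    (blackLeft^[k] b).mapWhite f = blackLeft^[k] (b.mapWhite f) :=
  Function.Commute.iterate_right (f := mapWhite f) (g := blackLeft) (fun _ => rfl) k b

theorem toTerm_mapWhite {f : BWWhite → BWWhite} {g : Term → Term}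
    (hfg : ∀ w k, (f w).toTerm k = g (w.toTerm k)) :
    ∀ (b : BWBlack) (k : ℕ), (b.mapWhite f).toTerm k = g (b.toTerm k)
  | .blackLeft b, k => toTerm_mapWhite hfg b (k + 1)
  | .whiteLeft w, k => hfg w k

end BWBlack

theorem Term.toTerm_toBlack (t : Term) : t.toBlack.toTerm 0 = t := by
  induction t with
  | var k =>
    rw [toBlack, BWBlack.toTerm_iterate_blackLeft, BWBlack.toTerm, BWWhite.toTerm, zero_add]
  | abs M ihM =>
    have toTerm_whiteLeft (w : BWWhite) (k : ℕ) : w.whiteLeft.toTerm k = abs (w.toTerm k) := by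
      rw [BWWhite.toTerm]
    rw [toBlack, BWBlack.toTerm_mapWhite toTerm_whiteLeft, ihM]
  | app M N ihM ihN =>
    have toTerm_whiteLeftBlackRight (w : BWWhite) (k : ℕ) :
        (w.whiteLeftBlackRight N.toBlack).toTerm k = app (w.toTerm k) N := by
      rw [BWWhite.toTerm, ihN]
    rw [toBlack, BWBlack.toTerm_mapWhite (g := (app · N)) toTerm_whiteLeftBlackRight, ihM]

mutual
  theorem BWBlack.toBlack_toTerm :
      ∀ (b : BWBlack) (k : ℕ), (b.toTerm k).toBlack = BWBlack.blackLeft^[k] b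
    | .blackLeft b, k => by
        rw [BWBlack.toTerm, b.toBlack_toTerm (k + 1), Function.iterate_succ_apply]
    | .whiteLeft w, k => by
        rw [BWBlack.toTerm, w.toBlack_toTerm k]

  theorem BWWhite.toBlack_toTerm :
      ∀ (w : BWWhite) (k : ℕ), (w.toTerm k).toBlack = BWBlack.blackLeft^[k] (.whiteLeft w)
    | .empty, k => by
        rw [BWWhite.toTerm, Term.toBlack]
    | .whiteLeft w, k => by
        rw [BWWhite.toTerm, Term.toBlack, w.toBlack_toTerm k,
          BWBlack.mapWhite_iterate_blackLeft, BWBlack.mapWhite]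
    | .whiteLeftBlackRight w b, k => by
        rw [BWWhite.toTerm, Term.toBlack, w.toBlack_toTerm k, b.toBlack_toTerm 0,
          BWBlack.mapWhite_iterate_blackLeft, BWBlack.mapWhite, Function.iterate_zero_apply]
end

/-- The mutually inverse maps `LtoBw` and `BwtoL` between lambda terms and black-white trees. -/
def Term.equivBlack : Term ≃ BWBlack where
  toFun := Term.toBlack
  invFun b := b.toTerm 0
  left_inv := Term.toTerm_toBlack
  right_inv b := b.toBlack_toTerm 0

theorem Term.size_equivBlack (t : Term) : (equivBlack t).size = t.size :=
  calc (equivBlack t).size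
    _ = (equivBlack.symm (equivBlack t)).size := ((equivBlack t).size_toTerm 0).symm
    _ = t.size := by rw [Equiv.symm_apply_apply]

theorem lambda_equinumerous_blackWhite :
    ∀ n : ℕ, L n = Nat.card {b : BWBlack // b.size = n} := by
  intro n
  exact Nat.card_congr (Term.equivBlack.subtypeEquiv fun t => by rw [Term.size_equivBlack])
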